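/- Let 0 < ε < √2·log 2 and let δ ∈ (ε, 1) satisfy g(δ, ε) = 0. Then for every x = (x₁, x₂) ∈ Ω_ε there exists φ ∈ BMO^d_ε([0,1]) with ∫₀¹ φ = x₁, ∫₀¹ φ² = x₂, and ∫₀¹ e^φ = B⁺_δ(x). -/

import Mathlib

open MeasureTheory Real

/-- The average of `φ` over the interval with endpoints `a`, `b`. -/
noncomputable def avg (φ : ℝ → ℝ) (a b : ℝ) : ℝ := (∫ t in a..b, φ t) / (b - a)

/-- `φ ∈ BMO_ε([a,b])`: `φ` and `φ²` are integrable on `[a,b]` and the mean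
oscillation `⟨φ²⟩_J − ⟨φ⟩_J²` is at most `ε²` on every nondegenerate
subinterval `J = [c,d] ⊆ [a,b]`. -/
def BMOe (ε a b : ℝ) (φ : ℝ → ℝ) : Prop :=
  IntervalIntegrable φ volume a b ∧
  IntervalIntegrable (fun t => (φ t) ^ 2) volume a b ∧
  ∀ c d : ℝ, a ≤ c → c < d → d ≤ b →
    avg (fun t => (φ t) ^ 2) c d - (avg φ c d) ^ 2 ≤ ε ^ 2
/-- `φ ∈ BMO^d_ε([0,1])`: `φ` and `φ²` are integrable on `[0,1]` and the mean
oscillation is at most `ε²` on every dyadic subinterval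
`[k/2^n, (k+1)/2^n]` of `[0,1]`. -/
def BMOd (ε : ℝ) (φ : ℝ → ℝ) : Prop :=
  IntervalIntegrable φ volume 0 1 ∧
  IntervalIntegrable (fun t => (φ t) ^ 2) volume 0 1 ∧
  ∀ n k : ℕ, k < 2 ^ n →
    avg (fun t => (φ t) ^ 2) ((k : ℝ) / 2 ^ n) (((k : ℝ) + 1) / 2 ^ n)
      - (avg φ ((k : ℝ) / 2 ^ n) (((k : ℝ) + 1) / 2 ^ n)) ^ 2 ≤ ε ^ 2
/-- The parabolic strip `Ω_ε = {x : x₁² ≤ x₂ ≤ x₁² + ε²}`. -/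
def Omega (ε : ℝ) : Set (ℝ × ℝ) := {x | x.1 ^ 2 ≤ x.2 ∧ x.2 ≤ x.1 ^ 2 + ε ^ 2}

/-- The upper Bellman function `B⁺_δ`. -/
noncomputable def Bp (δ : ℝ) (x : ℝ × ℝ) : ℝ :=
  (1 - Real.sqrt (δ ^ 2 + x.1 ^ 2 - x.2)) / (1 - δ) *
    Real.exp (x.1 + Real.sqrt (δ ^ 2 + x.1 ^ 2 - x.2) - δ)

/-- The lower Bellman function `B⁻_δ`. -/
noncomputable def Bm (δ : ℝ) (x : ℝ × ℝ) : ℝ :=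
  (1 + Real.sqrt (δ ^ 2 + x.1 ^ 2 - x.2)) / (1 + δ) *
    Real.exp (x.1 - Real.sqrt (δ ^ 2 + x.1 ^ 2 - x.2) + δ)
/-- The function `g(δ,ε)` whose root determines the sharp dyadic parameter `δ⁺(ε)`. -/
noncomputable def g (δ ε : ℝ) : ℝ :=
  (1 - Real.sqrt (δ ^ 2 - ε ^ 2)) * Real.exp (Real.sqrt (δ ^ 2 - ε ^ 2)) *
      (2 - Real.exp (ε / Real.sqrt 2)) -
    (1 - δ) * Real.exp (δ - ε / Real.sqrt 2)


/-- `F` is `f` on the left half and `q` on the right half, rescaled. -/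
def IsGlue (F f q : ℝ → ℝ) : Prop :=
  (∀ t ∈ Set.Ioo (0:ℝ) (1/2), F t = f (2*t)) ∧ (∀ t ∈ Set.Ioo (1/2:ℝ) 1, F t = q (2*t-1))

lemma IsGlue.comp {F f q : ℝ → ℝ} (H : IsGlue F f q) (G : ℝ → ℝ) :
    IsGlue (fun t => G (F t)) (fun t => G (f t)) (fun t => G (q t)) :=
  ⟨fun t ht => by simp only [H.1 t ht], fun t ht => by simp only [H.2 t ht]⟩

lemma integral_congr_Ioo_aux {f q : ℝ → ℝ} {a b : ℝ} (hab : a ≤ b)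
    (H : ∀ t ∈ Set.Ioo a b, f t = q t) : ∫ t in a..b, f t = ∫ t in a..b, q t := by
  rw [intervalIntegral.integral_of_le hab, intervalIntegral.integral_of_le hab,
    integral_Ioc_eq_integral_Ioo, integral_Ioc_eq_integral_Ioo]
  exact setIntegral_congr_fun measurableSet_Ioo H

lemma IsGlue.left {F f q : ℝ → ℝ} (H : IsGlue F f q) {a b : ℝ} (ha : 0 ≤ a) (hab : a ≤ b)
    (hb : b ≤ 1) : ∫ t in (a/2)..(b/2), F t = (∫ t in a..b, f t) / 2 := by
  rw [integral_congr_Ioo_aux (q := fun t => f (2*t)) (by linarith)]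
  · rw [intervalIntegral.integral_comp_mul_left (fun t => f t) (by norm_num : (2:ℝ) ≠ 0)]
    rw [mul_div_cancel₀ _ (by norm_num : (2:ℝ) ≠ 0), mul_div_cancel₀ _ (by norm_num : (2:ℝ) ≠ 0),
      smul_eq_mul]
    ring
  · intro t ht
    exact H.1 t ⟨by linarith [ht.1], by linarith [ht.2]⟩

lemma IsGlue.right {F f q : ℝ → ℝ} (H : IsGlue F f q) {a b : ℝ} (ha : 0 ≤ a) (hab : a ≤ b)
    (hb : b ≤ 1) : ∫ t in ((1+a)/2)..((1+b)/2), F t = (∫ t in a..b, q t) / 2 := by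
  rw [integral_congr_Ioo_aux (q := fun t => q (2*t-1)) (by linarith)]
  · rw [intervalIntegral.integral_comp_mul_sub (fun t => q t) (by norm_num : (2:ℝ) ≠ 0)]
    rw [mul_div_cancel₀ _ (by norm_num : (2:ℝ) ≠ 0), mul_div_cancel₀ _ (by norm_num : (2:ℝ) ≠ 0),
      smul_eq_mul]
    simp only [add_sub_cancel_left]
    ring
  · intro t ht
    exact H.2 t ⟨by linarith [ht.1], by linarith [ht.2]⟩

lemma IsGlue.integral {F f q : ℝ → ℝ} (H : IsGlue F f q) (hF : IntervalIntegrable F volume 0 1) :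
    ∫ t in (0:ℝ)..1, F t = ((∫ t in (0:ℝ)..1, f t) + ∫ t in (0:ℝ)..1, q t) / 2 := by
  have h1 := H.left (a := 0) (b := 1) le_rfl zero_le_one le_rfl
  have h2 := H.right (a := 0) (b := 1) le_rfl zero_le_one le_rfl
  norm_num at h1 h2
  rw [← intervalIntegral.integral_add_adjacent_intervals (b := (1/2:ℝ))
    (hF.mono_set _) (hF.mono_set _)]
  · norm_num
    rw [h1, h2]; ring
  · rw [Set.uIcc_of_le (by norm_num), Set.uIcc_of_le (by norm_num)]
    exact Set.Icc_subset_Icc (by norm_num) (by norm_num)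
  · rw [Set.uIcc_of_le (by norm_num), Set.uIcc_of_le (by norm_num)]
    exact Set.Icc_subset_Icc (by norm_num) (by norm_num)

/-- variance on `[a,b]` -/
noncomputable def vr (f : ℝ → ℝ) (a b : ℝ) : ℝ :=
  avg (fun t => (f t) ^ 2) a b - (avg f a b) ^ 2

/-- level-`n` condition -/
def Qn (ε : ℝ) (n : ℕ) (f : ℝ → ℝ) : Prop :=
  ∀ k : ℕ, k < 2 ^ n → vr f ((k : ℝ) / 2 ^ n) (((k : ℝ) + 1) / 2 ^ n) ≤ ε ^ 2

lemma IsGlue.avg_left {F f q : ℝ → ℝ} (H : IsGlue F f q) {a b : ℝ} (ha : 0 ≤ a) (hab : a ≤ b)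
    (hb : b ≤ 1) : avg F (a/2) (b/2) = avg f a b := by
  unfold avg
  rw [H.left ha hab hb, ← sub_div, div_div_div_cancel_right₀ (by norm_num)]

lemma IsGlue.avg_right {F f q : ℝ → ℝ} (H : IsGlue F f q) {a b : ℝ} (ha : 0 ≤ a) (hab : a ≤ b)
    (hb : b ≤ 1) : avg F ((1+a)/2) ((1+b)/2) = avg q a b := by
  unfold avg
  rw [H.right ha hab hb, ← sub_div, div_div_div_cancel_right₀ (by norm_num), add_sub_add_left_eq_sub]

lemma Qn_succ {ε : ℝ} {n : ℕ} {F f q : ℝ → ℝ} (H : IsGlue F f q) (hf : Qn ε n f)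
    (hq : Qn ε n q) : Qn ε (n+1) F := by
  intro k hk
  have H2 := H.comp (fun y => y ^ 2)
  have hp : (0:ℝ) < 2 ^ n := by positivity
  by_cases hkn : k < 2 ^ n
  · have h := hf k hkn
    have e1 : (k:ℝ) / 2^(n+1) = (k / 2^n) / 2 := by rw [pow_succ, div_div]
    have e2 : ((k:ℝ)+1) / 2^(n+1) = ((k+1) / 2^n) / 2 := by rw [pow_succ, div_div]
    have b0 : (0:ℝ) ≤ k / 2^n := by positivity
    have b1 : (k:ℝ) / 2^n ≤ (k+1) / 2^n := by gcongr; linarith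
    have b2 : ((k:ℝ)+1) / 2^n ≤ 1 := by
      rw [div_le_one hp]; exact_mod_cast hkn
    unfold vr at h ⊢
    rwa [e1, e2, H.avg_left b0 b1 b2, H2.avg_left b0 b1 b2]
  · obtain ⟨j, rfl⟩ := Nat.exists_eq_add_of_le (not_lt.mp hkn)
    have hj : j < 2 ^ n := by rw [pow_succ] at hk; omega
    have h := hq j hj
    have e1 : ((2^n + j : ℕ):ℝ) / 2^(n+1) = (1 + j / 2^n) / 2 := by push_cast; field_simp; ring
    have e2 : (((2^n + j : ℕ):ℝ)+1) / 2^(n+1) = (1 + (j+1) / 2^n) / 2 := by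
      push_cast; field_simp; ring
    have b0 : (0:ℝ) ≤ j / 2^n := by positivity
    have b1 : (j:ℝ) / 2^n ≤ (j+1) / 2^n := by gcongr; linarith
    have b2 : ((j:ℝ)+1) / 2^n ≤ 1 := by
      rw [div_le_one hp]; exact_mod_cast hj
    unfold vr at h ⊢
    rwa [e1, e2, H.avg_right b0 b1 b2, H2.avg_right b0 b1 b2]

lemma Qn_const (ε : ℝ) (n : ℕ) (c : ℝ) : Qn ε n (fun _ => c) := by
  intro k _
  have hne : ((k:ℝ)+1) / 2^n - k/2^n ≠ 0 := by
    rw [← sub_div]; simp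
  unfold vr avg
  simp only [intervalIntegral.integral_const, smul_eq_mul]
  rw [mul_div_cancel_left₀ _ hne, mul_div_cancel_left₀ _ hne, sub_self]
  positivity

lemma Qn_zero {ε : ℝ} {f : ℝ → ℝ}
    (h : (∫ t in (0:ℝ)..1, (f t)^2) - (∫ t in (0:ℝ)..1, f t)^2 ≤ ε^2) : Qn ε 0 f := by
  intro k hk
  have : k = 0 := by simpa using hk
  subst this
  simpa [vr, avg] using h

/-- the top function -/
noncomputable def psi (h c t : ℝ) : ℝ := c - h * (2 + (⌊Real.logb 2 t⌋ : ℝ))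

lemma psi_meas (h c : ℝ) : Measurable (psi h c) := by
  unfold psi Real.logb
  fun_prop

lemma psi_glue (h c : ℝ) : IsGlue (psi h c) (psi h (c+h)) (fun _ => c - h) := by
  constructor
  · intro t ht
    have ht0 : t ≠ 0 := ht.1.ne'
    unfold psi
    rw [Real.logb_mul (by norm_num) ht0, Real.logb_self_eq_one (by norm_num), add_comm 1,
      Int.floor_add_one]
    push_cast; ring
  · intro t ht
    have hf : ⌊Real.logb 2 t⌋ = -1 := by
      rw [Int.floor_eq_iff]
      constructor
      · push_cast
        rw [Real.le_logb_iff_rpow_le (by norm_num) (by linarith [ht.1]), Real.rpow_neg_one]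
        linarith [ht.1]
      · push_cast
        have := Real.logb_neg (b := 2) (by norm_num) (by linarith [ht.1]) ht.2
        linarith
    unfold psi
    rw [hf]; push_cast; ring

lemma psi_ge {h : ℝ} (hh : 0 < h) (c : ℝ) {t : ℝ} (ht : t ∈ Set.Ioo (0:ℝ) 1) :
    c - h ≤ psi h c t := by
  have h1 : Real.logb 2 t < 0 := Real.logb_neg (by norm_num) ht.1 ht.2
  have h2 : (⌊Real.logb 2 t⌋ : ℝ) ≤ -1 := by
    have : ⌊Real.logb 2 t⌋ < 0 := Int.floor_lt.mpr (by simpa using h1)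
    exact_mod_cast (by omega : ⌊Real.logb 2 t⌋ ≤ -1)
  unfold psi
  nlinarith

lemma psi_exp_le {h : ℝ} (hh : 0 < h) (c : ℝ) {t : ℝ} (ht : t ∈ Set.Ioo (0:ℝ) 1) :
    Real.exp (psi h c t) ≤ Real.exp (c - h) * t ^ (-(h / Real.log 2)) := by
  rw [Real.rpow_def_of_pos ht.1, ← Real.exp_add]
  apply Real.exp_le_exp.mpr
  have h1 := Int.sub_one_lt_floor (Real.logb 2 t)
  have h2 : Real.log t * -(h / Real.log 2) = - h * Real.logb 2 t := by
    unfold Real.logb; ring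
  rw [h2]
  unfold psi
  nlinarith

lemma psi_int_exp {h : ℝ} (hh : 0 < h) (hl : h < Real.log 2) (c : ℝ) :
    IntervalIntegrable (fun t => Real.exp (psi h c t)) volume 0 1 := by
  have hr : IntervalIntegrable (fun t : ℝ => Real.exp (c-h) * t ^ (-(h / Real.log 2))) volume 0 1 :=
    (intervalIntegral.intervalIntegrable_rpow' (by
      have : h / Real.log 2 < 1 := by
        rw [div_lt_one (Real.log_pos (by norm_num))]; exact hl
      linarith)).const_mul _
  rw [intervalIntegrable_iff_integrableOn_Ioo_of_le zero_le_one] at hr ⊢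
  refine hr.mono' ((Real.measurable_exp.comp (psi_meas h c)).aestronglyMeasurable) ?_
  filter_upwards [ae_restrict_mem measurableSet_Ioo] with t ht
  rw [Real.norm_eq_abs, abs_of_pos (Real.exp_pos _)]
  exact psi_exp_le hh c ht

lemma psi_int_sq {h : ℝ} (hh : 0 < h) (hl : h < Real.log 2) (c : ℝ) :
    IntervalIntegrable (fun t => (psi h c t)^2) volume 0 1 := by
  have hr : IntervalIntegrable (fun t : ℝ => (c-h)^2 + 2 * Real.exp (psi h c t)) volume 0 1 :=
    intervalIntegrable_const.add ((psi_int_exp hh hl c).const_mul _)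
  rw [intervalIntegrable_iff_integrableOn_Ioo_of_le zero_le_one] at hr ⊢
  refine hr.mono' (((psi_meas h c).pow_const 2).aestronglyMeasurable) ?_
  filter_upwards [ae_restrict_mem measurableSet_Ioo] with t ht
  rw [Real.norm_eq_abs, abs_of_nonneg (by positivity)]
  have h1 := psi_ge hh c ht
  rcases le_total 0 (psi h c t) with h0 | h0
  · have := Real.quadratic_le_exp_of_nonneg h0
    nlinarith [sq_nonneg (c-h)]
  · nlinarith [Real.exp_pos (psi h c t)]

lemma psi_int {h : ℝ} (hh : 0 < h) (hl : h < Real.log 2) (c : ℝ) :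
    IntervalIntegrable (psi h c) volume 0 1 := by
  have hr : IntervalIntegrable (fun t : ℝ => 1 + (psi h c t)^2) volume 0 1 :=
    intervalIntegrable_const.add (psi_int_sq hh hl c)
  rw [intervalIntegrable_iff_integrableOn_Ioo_of_le zero_le_one] at hr ⊢
  refine hr.mono' ((psi_meas h c).aestronglyMeasurable) (Filter.Eventually.of_forall fun t => ?_)
  rw [Real.norm_eq_abs]
  apply abs_le.mpr
  constructor <;> nlinarith [sq_nonneg (psi h c t - 1), sq_nonneg (psi h c t + 1)]

lemma psi_shift (h c d t : ℝ) : psi h (c + d) t = psi h c t + d := by unfold psi; ring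

lemma psi_I1 {h : ℝ} (hh : 0 < h) (hl : h < Real.log 2) (c : ℝ) :
    ∫ t in (0:ℝ)..1, psi h c t = c := by
  have H := (psi_glue h c).integral (psi_int hh hl c)
  simp only [psi_shift] at H
  rw [intervalIntegral.integral_add (psi_int hh hl c) intervalIntegrable_const] at H
  simp at H
  linarith

lemma psi_I2 {h : ℝ} (hh : 0 < h) (hl : h < Real.log 2) (c : ℝ) :
    ∫ t in (0:ℝ)..1, (psi h c t)^2 = c^2 + 2*h^2 := by
  have H := ((psi_glue h c).comp (fun y => y^2)).integral (psi_int_sq hh hl c)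
  simp only [psi_shift] at H
  have e : (fun t => (psi h c t + h)^2) = fun t => (psi h c t)^2 + (2*h*psi h c t + h^2) := by
    funext t; ring
  rw [e, intervalIntegral.integral_add (psi_int_sq hh hl c)
    (((psi_int hh hl c).const_mul _).add intervalIntegrable_const),
    intervalIntegral.integral_add ((psi_int hh hl c).const_mul _) intervalIntegrable_const,
    intervalIntegral.integral_const_mul, psi_I1 hh hl] at H
  simp at H
  linarith

lemma psi_I3 {h : ℝ} (hh : 0 < h) (hl : h < Real.log 2) (c : ℝ) :
    (∫ t in (0:ℝ)..1, Real.exp (psi h c t)) * (2 - Real.exp h) = Real.exp (c - h) := by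
  have H := ((psi_glue h c).comp Real.exp).integral (psi_int_exp hh hl c)
  simp only [psi_shift, Real.exp_add] at H
  rw [intervalIntegral.integral_mul_const] at H
  simp at H
  linarith

lemma psi_Qn {ε h : ℝ} (hh : 0 < h) (hl : h < Real.log 2) (he : 2*h^2 ≤ ε^2) (n : ℕ) :
    ∀ c, Qn ε n (psi h c) := by
  induction n with
  | zero =>
    intro c
    apply Qn_zero
    rw [psi_I1 hh hl, psi_I2 hh hl]; linarith
  | succ n ih => exact fun c => Qn_succ (psi_glue h c) (ih _) (Qn_const _ _ _)

/-- finite-depth approximations of the mixture -/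
noncomputable def mixn (T : ℝ → ℝ) (u : ℝ) : ℕ → ℝ → ℝ → ℝ
  | 0, _, _ => u
  | n+1, α, t =>
    if α ≤ 1/2 then (if t < 1/2 then mixn T u n (2*α) (2*t) else u)
    else (if t < 1/2 then T (2*t) else mixn T u n (2*α-1) (2*t-1))

lemma mixn_meas {T : ℝ → ℝ} (hT : Measurable T) (u : ℝ) (n : ℕ) :
    ∀ α, Measurable (mixn T u n α) := by
  induction n with
  | zero => intro α; exact measurable_const
  | succ n ih =>
    intro α
    have hs : MeasurableSet {t : ℝ | t < 1/2} := measurableSet_Iio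
    by_cases h : α ≤ 1/2
    · have : mixn T u (n+1) α = fun t => if t < 1/2 then mixn T u n (2*α) (2*t) else u := by
        funext t; simp only [mixn, if_pos h]
      rw [this]
      exact Measurable.ite hs ((ih _).comp (measurable_const_mul 2)) measurable_const
    · have : mixn T u (n+1) α =
          fun t => if t < 1/2 then T (2*t) else mixn T u n (2*α-1) (2*t-1) := by
        funext t; simp only [mixn, if_neg h]
      rw [this]
      exact Measurable.ite hs (hT.comp (measurable_const_mul 2))
        ((ih _).comp ((measurable_const_mul 2).sub_const 1))

lemma mixn_stable (T : ℝ → ℝ) (u : ℝ) (n : ℕ) :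
    ∀ α t, mixn T u n α t ≠ u → mixn T u (n+1) α t = mixn T u n α t := by
  induction n with
  | zero => intro α t h; exact absurd rfl h
  | succ n ih =>
    intro α t h
    rw [mixn] at h
    rw [mixn]
    conv_rhs => rw [mixn]
    split_ifs at h ⊢ with h1 h2 h2
    · exact ih _ _ h
    · rfl
    · rfl
    · exact ih _ _ h

lemma mixn_conv (T : ℝ → ℝ) (u α t : ℝ) :
    ∃ c, Filter.Tendsto (fun n => mixn T u n α t) Filter.atTop (nhds c) := by
  by_cases h : ∀ n, mixn T u n α t = u
  · exact ⟨u, by simp only [h]; exact tendsto_const_nhds⟩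
  · push Not at h
    obtain ⟨N, hN⟩ := h
    refine ⟨mixn T u N α t, tendsto_atTop_of_eventually_const (i₀ := N) fun n hn => ?_⟩
    induction n, hn using Nat.le_induction with
    | base => rfl
    | succ n hn ih => rw [mixn_stable _ _ _ _ _ (by rw [ih]; exact hN), ih]

/-- the mixture -/
noncomputable def mix (T : ℝ → ℝ) (u α t : ℝ) : ℝ := (mixn_conv T u α t).choose

lemma mix_spec (T : ℝ → ℝ) (u α t : ℝ) :
    Filter.Tendsto (fun n => mixn T u n α t) Filter.atTop (nhds (mix T u α t)) :=
  (mixn_conv T u α t).choose_spec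

lemma mix_meas {T : ℝ → ℝ} (hT : Measurable T) (u α : ℝ) : Measurable (mix T u α) :=
  measurable_of_tendsto_metrizable (fun n => mixn_meas hT u n α)
    (tendsto_pi_nhds.mpr fun t => mix_spec T u α t)

lemma mix_rec (T : ℝ → ℝ) (u α t : ℝ) : mix T u α t =
    if α ≤ 1/2 then (if t < 1/2 then mix T u (2*α) (2*t) else u)
    else (if t < 1/2 then T (2*t) else mix T u (2*α-1) (2*t-1)) := by
  have h := (mix_spec T u α t).comp (Filter.tendsto_add_atTop_nat 1)
  refine tendsto_nhds_unique h ?_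
  simp only [Function.comp_def, mixn]
  split_ifs
  · exact mix_spec _ _ _ _
  · exact tendsto_const_nhds
  · exact tendsto_const_nhds
  · exact mix_spec _ _ _ _

lemma mix_glue_le (T : ℝ → ℝ) (u : ℝ) {α : ℝ} (h : α ≤ 1/2) :
    IsGlue (mix T u α) (mix T u (2*α)) (fun _ => u) := by
  constructor
  · intro t ht
    rw [mix_rec, if_pos h, if_pos ht.2]
  · intro t ht
    rw [mix_rec, if_pos h, if_neg (not_lt.mpr ht.1.le)]

lemma mix_glue_gt (T : ℝ → ℝ) (u : ℝ) {α : ℝ} (h : ¬ α ≤ 1/2) :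
    IsGlue (mix T u α) T (mix T u (2*α-1)) := by
  constructor
  · intro t ht
    rw [mix_rec, if_neg h, if_pos ht.2]
  · intro t ht
    rw [mix_rec, if_neg h, if_neg (not_lt.mpr ht.1.le)]

lemma bdd_int {F : ℝ → ℝ} (hF : Measurable F) (hb : ∀ t, |F t| ≤ 1) :
    IntervalIntegrable F volume 0 1 := by
  have : IntervalIntegrable (fun _ : ℝ => (1:ℝ)) volume 0 1 := intervalIntegrable_const
  exact this.mono_fun' hF.aestronglyMeasurable (Filter.Eventually.of_forall fun t => by simpa using hb t)

lemma bdd_int_le {F : ℝ → ℝ} (hb : ∀ t, |F t| ≤ 1) : |∫ t in (0:ℝ)..1, F t| ≤ 1 := by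
  have := intervalIntegral.norm_integral_le_of_norm_le_const (a := (0:ℝ)) (b := 1) (C := 1) (f := F)
    (fun t _ => hb t)
  simpa using this

lemma mix_bdd {T : ℝ → ℝ} (hT : Measurable T) (u : ℝ) {G : ℝ → ℝ} (hG : Measurable G)
    (hb : ∀ y, |G y| ≤ 1) (n : ℕ) : ∀ α ∈ Set.Icc (0:ℝ) 1,
    |(∫ t in (0:ℝ)..1, G (mix T u α t)) - ((1-α) * G u + α * ∫ t in (0:ℝ)..1, G (T t))|
      ≤ 2 * (1/2)^n := by
  induction n with
  | zero =>
    intro α hα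
    have h1 := bdd_int_le (F := fun t => G (mix T u α t)) (fun t => hb _)
    have h2 := bdd_int_le (F := fun t => G (T t)) (fun t => hb _)
    have h3 := hb u
    rw [abs_le] at h1 h2 h3 ⊢
    obtain ⟨a0, a1⟩ := hα
    constructor <;> nlinarith
  | succ n ih =>
    intro α hα
    have hi : IntervalIntegrable (fun t => G (mix T u α t)) volume 0 1 :=
      bdd_int (hG.comp (mix_meas hT u α)) (fun t => hb _)
    by_cases h : α ≤ 1/2
    · have H := ((mix_glue_le T u h).comp G).integral hi
      have I := ih (2*α) ⟨by linarith [hα.1], by linarith⟩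
      rw [H, pow_succ]
      simp only [intervalIntegral.integral_const]
      rw [abs_le] at I ⊢
      simp only [sub_zero, one_smul]
      constructor <;> linarith [I.1, I.2]
    · have H := ((mix_glue_gt T u h).comp G).integral hi
      have I := ih (2*α-1) ⟨by linarith, by linarith [hα.2]⟩
      rw [H, pow_succ]
      rw [abs_le] at I ⊢
      constructor <;> linarith [I.1, I.2]

lemma mix_bdd_eq {T : ℝ → ℝ} (hT : Measurable T) (u : ℝ) {G : ℝ → ℝ} (hG : Measurable G)
    (hb : ∀ y, |G y| ≤ 1) {α : ℝ} (hα : α ∈ Set.Icc (0:ℝ) 1) :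
    (∫ t in (0:ℝ)..1, G (mix T u α t)) = (1-α) * G u + α * ∫ t in (0:ℝ)..1, G (T t) := by
  have hl : Filter.Tendsto (fun n : ℕ => 2 * (1/2:ℝ)^n) Filter.atTop (nhds (2 * 0)) :=
    (tendsto_pow_atTop_nhds_zero_of_lt_one (by norm_num) (by norm_num)).const_mul 2
  have := ge_of_tendsto' hl (fun n => mix_bdd hT u hG hb n α hα)
  rw [mul_zero] at this
  exact sub_eq_zero.mp (abs_nonpos_iff.mp this)

lemma mix_law {T : ℝ → ℝ} (hT : Measurable T) (u : ℝ) {α : ℝ} (hα : α ∈ Set.Icc (0:ℝ) 1) :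
    Measure.map (mix T u α) (volume.restrict (Set.Ioc 0 1)) =
      ENNReal.ofReal (1-α) • Measure.dirac u +
      ENNReal.ofReal α • Measure.map T (volume.restrict (Set.Ioc 0 1)) := by
  ext S hS
  have key := mix_bdd_eq hT u (G := S.indicator 1) (measurable_one.indicator hS)
    (fun y => by by_cases hy : y ∈ S <;> simp [hy]) hα
  have tr : ∀ f : ℝ → ℝ, Measurable f → ∫ t in (0:ℝ)..1, S.indicator (1 : ℝ → ℝ) (f t) =
      (volume.restrict (Set.Ioc (0:ℝ) 1)).real (f ⁻¹' S) := by
    intro f hf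
    rw [intervalIntegral.integral_of_le zero_le_one, ← integral_indicator_one (hf hS)]
    rfl
  rw [tr _ (mix_meas hT u α), tr _ hT] at key
  have hd : (Measure.dirac u : Measure ℝ).real S = S.indicator (1 : ℝ → ℝ) u := by
    rw [measureReal_def, Measure.dirac_apply' _ hS]
    by_cases hy : u ∈ S <;> simp [hy]
  rw [← hd] at key
  rw [Measure.add_apply, Measure.smul_apply, Measure.smul_apply, smul_eq_mul, smul_eq_mul,
    Measure.map_apply (mix_meas hT u α) hS, Measure.map_apply hT hS]
  rw [← ofReal_measureReal (measure_ne_top _ _), key,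
    ENNReal.ofReal_add (mul_nonneg (by linarith [hα.2]) measureReal_nonneg)
      (mul_nonneg hα.1 measureReal_nonneg),
    ENNReal.ofReal_mul (by linarith [hα.2]), ENNReal.ofReal_mul hα.1,
    ofReal_measureReal (measure_ne_top _ _), ofReal_measureReal (measure_ne_top _ _)]

lemma mix_int {T : ℝ → ℝ} (hT : Measurable T) (u : ℝ) {α : ℝ} (hα : α ∈ Set.Icc (0:ℝ) 1)
    {G : ℝ → ℝ} (hG : Measurable G) (hi : IntervalIntegrable (fun t => G (T t)) volume 0 1) :
    IntervalIntegrable (fun t => G (mix T u α t)) volume 0 1 ∧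
    (∫ t in (0:ℝ)..1, G (mix T u α t)) = (1-α) * G u + α * ∫ t in (0:ℝ)..1, G (T t) := by
  rw [intervalIntegrable_iff_integrableOn_Ioc_of_le zero_le_one] at hi ⊢
  have hm := mix_meas hT u α
  have i1 : Integrable G (Measure.map T (volume.restrict (Set.Ioc 0 1))) :=
    (integrable_map_measure hG.aestronglyMeasurable hT.aemeasurable).mpr hi
  have i2 : Integrable G (ENNReal.ofReal α • Measure.map T (volume.restrict (Set.Ioc 0 1))) :=
    i1.smul_measure ENNReal.ofReal_ne_top
  have i3 : Integrable G (ENNReal.ofReal (1-α) • Measure.dirac u) :=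
    (integrable_dirac (by simp)).smul_measure ENNReal.ofReal_ne_top
  have i4 := i3.add_measure i2
  rw [← mix_law hT u hα] at i4
  refine ⟨(integrable_map_measure hG.aestronglyMeasurable hm.aemeasurable).mp i4, ?_⟩
  rw [intervalIntegral.integral_of_le zero_le_one, intervalIntegral.integral_of_le zero_le_one,
    ← integral_map hm.aemeasurable hG.aestronglyMeasurable, mix_law hT u hα,
    integral_add_measure i3 i2, integral_smul_measure, integral_smul_measure, integral_dirac,
    integral_map hT.aemeasurable hG.aestronglyMeasurable,
    ENNReal.toReal_ofReal hα.1, ENNReal.toReal_ofReal (by linarith [hα.2])]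
  rfl

lemma mix_Qn {ε : ℝ} {T : ℝ → ℝ} (u : ℝ) (hQT : ∀ n, Qn ε n T)
    (h0 : ∀ α ∈ Set.Icc (0:ℝ) 1, Qn ε 0 (mix T u α)) (n : ℕ) :
    ∀ α ∈ Set.Icc (0:ℝ) 1, Qn ε n (mix T u α) := by
  induction n with
  | zero => exact h0
  | succ n ih =>
    intro α hα
    by_cases h : α ≤ 1/2
    · exact Qn_succ (mix_glue_le T u h) (ih _ ⟨by linarith [hα.1], by linarith⟩) (Qn_const _ _ _)
    · exact Qn_succ (mix_glue_gt T u h) (hQT n) (ih _ ⟨by linarith, by linarith [hα.2]⟩)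

theorem stmt14 (ε δ : ℝ) (hε0 : 0 < ε) (hε1 : ε < Real.sqrt 2 * Real.log 2)
    (hδ : δ ∈ Set.Ioo ε 1) (hg : g δ ε = 0)
    (x : ℝ × ℝ) (hx : x ∈ Omega ε) :
    ∃ φ : ℝ → ℝ, BMOd ε φ ∧
      (∫ t in (0:ℝ)..1, φ t) = x.1 ∧
      (∫ t in (0:ℝ)..1, (φ t) ^ 2) = x.2 ∧
      IntervalIntegrable (fun t => Real.exp (φ t)) volume 0 1 ∧
      (∫ t in (0:ℝ)..1, Real.exp (φ t)) = Bp δ x := by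
  obtain ⟨hδ1, hδ2⟩ := hδ
  obtain ⟨x1, x2⟩ := x
  obtain ⟨hx1, hx2⟩ := hx
  simp only at hx1 hx2
  have h2 : (0:ℝ) < Real.sqrt 2 := Real.sqrt_pos.mpr (by norm_num)
  have hh : 0 < ε / Real.sqrt 2 := div_pos hε0 h2
  have hl : ε / Real.sqrt 2 < Real.log 2 := by rw [div_lt_iff₀ h2]; linarith
  have he : 2 * (ε / Real.sqrt 2)^2 = ε^2 := by
    rw [div_pow, Real.sq_sqrt (by norm_num)]; ring
  unfold g at hg
  unfold Bp
  simp only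
  set h := ε / Real.sqrt 2 with hhdef
  have hs2 : Real.sqrt (δ^2-ε^2)^2 = δ^2-ε^2 := Real.sq_sqrt (by nlinarith)
  have hs0 : 0 ≤ Real.sqrt (δ^2-ε^2) := Real.sqrt_nonneg _
  have hrs : Real.sqrt (δ^2-ε^2) ≤ Real.sqrt (δ^2+x1^2-x2) := Real.sqrt_le_sqrt (by linarith)
  have hr2 : Real.sqrt (δ^2+x1^2-x2)^2 = δ^2+x1^2-x2 := Real.sq_sqrt (by nlinarith)
  set s := Real.sqrt (δ^2-ε^2) with hsdef
  set r := Real.sqrt (δ^2+x1^2-x2) with hrdef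
  have hrδ : r ≤ δ := by nlinarith
  have hsδ : s < δ := by nlinarith
  set u := x1 + r - δ with hu
  set T := psi h (u + δ - s) with hTdef
  have hT : Measurable T := psi_meas _ _
  have T1 : ∫ t in (0:ℝ)..1, T t = u + δ - s := psi_I1 hh hl _
  have T2 : ∫ t in (0:ℝ)..1, (T t)^2 = (u + δ - s)^2 + ε^2 := by
    rw [← he]; exact psi_I2 hh hl _
  have hel : Real.exp h < 2 := by
    rw [← Real.exp_log (by norm_num : (0:ℝ) < 2)]; exact Real.exp_lt_exp.mpr hl
  have T3 : ∫ t in (0:ℝ)..1, Real.exp (T t) = (1-s)/(1-δ) * Real.exp u := by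
    have e := psi_I3 hh hl (u+δ-s)
    have p1 : 0 < 1 - δ := by linarith
    have p2 : 0 < 2 - Real.exp h := by linarith
    apply mul_right_cancel₀ p2.ne'
    rw [e]
    have e1 : Real.exp (u+δ-s-h) = Real.exp u * Real.exp (δ-h) / Real.exp s := by
      rw [← Real.exp_add, ← Real.exp_sub]; congr 1; ring
    rw [e1]
    have := Real.exp_pos s
    field_simp
    linear_combination -hg
  have G1 : ∀ α ∈ Set.Icc (0:ℝ) 1, _ := fun α hα =>
    mix_int hT u hα (G := fun y => y) measurable_id (psi_int hh hl (u + δ - s))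
  have G2 : ∀ α ∈ Set.Icc (0:ℝ) 1, _ := fun α hα =>
    mix_int hT u hα (G := fun y => y^2) (measurable_id.pow_const 2) (psi_int_sq hh hl (u + δ - s))
  have G3 : ∀ α ∈ Set.Icc (0:ℝ) 1, _ := fun α hα =>
    mix_int hT u hα (G := Real.exp) Real.measurable_exp (psi_int_exp hh hl (u + δ - s))
  have hQ := mix_Qn (ε := ε) u (T := T) (fun n => psi_Qn hh hl he.le n _) (fun α hα => by
    apply Qn_zero
    have a1 := (G1 α hα).2
    have a2 := (G2 α hα).2
    rw [a1, a2, T1, T2]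
    obtain ⟨b0, b1⟩ := hα
    have hd : 0 ≤ δ - s := by linarith
    have : ((1-α)*u^2 + α*((u+δ-s)^2+ε^2)) - ((1-α)*u + α*(u+δ-s))^2
        = ε^2 - (1-α)*(δ-s)*(δ+s-α*(δ-s)) := by linear_combination (α-1) * hs2
    rw [this]
    have p : 0 ≤ (1-α)*(δ-s)*(δ+s-α*(δ-s)) := by
      apply mul_nonneg (mul_nonneg (by linarith) hd)
      nlinarith
    linarith)
  have hds : 0 < δ - s := by linarith
  set α := (x1 - u)/(δ-s) with hαdef
  have hα : α ∈ Set.Icc (0:ℝ) 1 := by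
    constructor
    · apply div_nonneg _ hds.le; rw [hu]; linarith
    · rw [hαdef, div_le_one hds, hu]; linarith
  have hαe : α * (δ-s) = δ - r := by
    rw [hαdef, div_mul_cancel₀ _ hds.ne', hu]; ring
  have a1 := G1 α hα
  have a2 := G2 α hα
  have a3 := G3 α hα
  refine ⟨mix T u α, ⟨a1.1, a2.1, fun n k hk => hQ n α hα k hk⟩, ?_, ?_, a3.1, ?_⟩
  · rw [a1.2, T1]; linear_combination hαe + hu
  · rw [a2.2, T2]
    linear_combination α * hs2 + (2*δ+2*u) * hαe + (u+δ-r+x1) * hu - hr2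
  · rw [a3.2, T3]
    have p1 : 1 - δ ≠ 0 := by linarith
    field_simp
    linear_combination hαe
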